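/- For d ≥ 1, the spherical average (1/|S^d|)·∫_{S^d} ln(dist(span{v}, x)) dS(v) equals ln|x| + C_{d,ln} for every x ∈ ℝ^{d+1} \ {0}, where C_{d,ln} = (|S^{d-1}|/|S^d|)·∫_0^π sin^{d-1}(φ)·ln(sin φ) dφ. -/

import Mathlib

open Real MeasureTheory Set
open scoped ENNReal

lemma polar_lint {E : Type*} [NormedAddCommGroup E] [NormedSpace ℝ E] [FiniteDimensional ℝ E]
    [Nontrivial E] [MeasurableSpace E] [BorelSpace E] (μ : Measure E) [μ.IsAddHaarMeasure]
    (F : E → ℝ≥0∞) (G : Metric.sphere (0 : E) 1 → ℝ≥0∞) (H : ℝ → ℝ≥0∞)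
    (hG : Measurable G) (hH : Measurable H)
    (hF : ∀ v : Metric.sphere (0 : E) 1, ∀ r : ℝ, 0 < r → F (r • (v : E)) = G v * H r) :
    ∫⁻ y, F y ∂μ = (∫⁻ v, G v ∂μ.toSphere) *
      ∫⁻ r in Ioi (0 : ℝ), ENNReal.ofReal (r ^ (Module.finrank ℝ E - 1)) * H r := by
  have h1 : ∫⁻ y, F y ∂μ = ∫⁻ x : ({(0)}ᶜ : Set E), F x ∂(μ.comap (↑)) := by
    rw [lintegral_subtype_comap (measurableSet_singleton _).compl F,
        restrict_compl_singleton]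
  rw [h1]
  have h2 : ∀ x : ({(0)}ᶜ : Set E), F x =
      (fun p : Metric.sphere (0 : E) 1 × Ioi (0 : ℝ) => G p.1 * H p.2)
        (homeomorphUnitSphereProd E x) := by
    intro x
    have := hF (homeomorphUnitSphereProd E x).1 (homeomorphUnitSphereProd E x).2
      (homeomorphUnitSphereProd E x).2.2
    refine Eq.trans ?_ this
    rw [← homeomorphUnitSphereProd_symm_apply_coe]
    simp
  rw [lintegral_congr h2]
  refine (μ.measurePreserving_homeomorphUnitSphereProd.lintegral_comp_emb
    (Homeomorph.measurableEmbedding _)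
    (fun p : Metric.sphere (0 : E) 1 × Ioi (0 : ℝ) => G p.1 * H p.2)).trans ?_
  rw [lintegral_prod_mul (f := G) (g := fun r : Ioi (0 : ℝ) => H r) (by fun_prop) (by fun_prop)]
  congr 1
  rw [Measure.volumeIoiPow, lintegral_withDensity_eq_lintegral_mul _ (by fun_prop) (by fun_prop),
    ← lintegral_subtype_comap measurableSet_Ioi]
  rfl

lemma lint_split (d : ℕ) (e : EuclideanSpace ℝ (Fin (d + 1))) (he : ‖e‖ = 1)
    (Φ : ℝ → ℝ → ℝ≥0∞) (hΦ : Measurable (Function.uncurry Φ)) :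
    ∫⁻ y : EuclideanSpace ℝ (Fin (d + 1)), Φ (inner ℝ e y) ‖y‖ =
      ∫⁻ t : ℝ, ∫⁻ w : EuclideanSpace ℝ (Fin d), Φ t (√(t ^ 2 + ‖w‖ ^ 2)) := by
  obtain ⟨b, hb⟩ := Orthonormal.exists_orthonormalBasis_extension_of_card_eq (𝕜 := ℝ)
    (E := EuclideanSpace ℝ (Fin (d + 1))) (ι := Fin (d + 1)) (by simp)
    (v := fun _ => e) (s := {0}) (by
      constructor
      · intro i; simpa using he
      · intro i j hij; exact absurd (Subsingleton.elim i j) hij)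
  have hb0 : b 0 = e := hb 0 rfl
  have h1 : ∀ y, Φ (inner ℝ e y) ‖y‖ =
      (fun z : EuclideanSpace ℝ (Fin (d + 1)) => Φ (z 0) ‖z‖) (b.repr y) := by
    intro y
    simp [b.repr_apply_apply, hb0]
  have m1 : Measurable (fun z : EuclideanSpace ℝ (Fin (d + 1)) => Φ (z 0) ‖z‖) :=
    hΦ.comp (f := fun z : EuclideanSpace ℝ (Fin (d + 1)) => (z 0, ‖z‖)) (by fun_prop)
  rw [lintegral_congr h1, b.measurePreserving_repr.lintegral_comp m1,
    ← (PiLp.volume_preserving_toLp (Fin (d+1))).lintegral_comp m1,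
    ← ((volume_preserving_piFinSuccAbove (fun _ : Fin (d + 1) => ℝ) 0).symm).lintegral_comp
      (by fun_prop)]
  rw [Measure.volume_eq_prod, lintegral_prod _ (by fun_prop)]
  congr 1 with t
  have m2 : Measurable (fun w : EuclideanSpace ℝ (Fin d) => Φ t (√(t ^ 2 + ‖w‖ ^ 2))) :=
    hΦ.comp (f := fun w : EuclideanSpace ℝ (Fin d) => (t, √(t ^ 2 + ‖w‖ ^ 2))) (by fun_prop)
  rw [← (PiLp.volume_preserving_toLp (Fin d)).lintegral_comp m2]
  congr 1 with w
  simp [EuclideanSpace.norm_eq, Fin.sum_univ_succ, MeasurableEquiv.piFinSuccAbove_symm_apply]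
  rw [Real.sq_sqrt (by positivity)]

lemma key (d : ℕ) (hd : 1 ≤ d) (e : EuclideanSpace ℝ (Fin (d + 1))) (he : ‖e‖ = 1)
    (K : ℝ → ℝ≥0∞) (hK : Measurable K) :
    ∫⁻ v : Metric.sphere (0 : EuclideanSpace ℝ (Fin (d + 1))) 1, K (inner ℝ e v)
      ∂((volume : Measure (EuclideanSpace ℝ (Fin (d + 1)))).toSphere) =
    (volume : Measure (EuclideanSpace ℝ (Fin d))).toSphere Set.univ *
      ∫⁻ θ in Ioo 0 π, ENNReal.ofReal (sin θ ^ (d - 1)) * K (cos θ) := by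
  have : Nonempty (Fin d) := ⟨⟨0, hd⟩⟩
  let h : ℝ → ℝ≥0∞ := (Ioo (0:ℝ) 1).indicator 1
  have hh : Measurable h := measurable_one.indicator measurableSet_Ioo
  let C : ℝ≥0∞ := ∫⁻ r in Ioi (0:ℝ), ENNReal.ofReal (r ^ d) * h r
  have hC : C = ∫⁻ r in Ioo (0:ℝ) 1, ENNReal.ofReal (r ^ d) := by
    simp only [C, h]
    rw [← lintegral_indicator measurableSet_Ioo, ← lintegral_indicator measurableSet_Ioi]
    congr 1 with r
    by_cases h0 : 0 < r <;> by_cases h1 : r < 1 <;> simp [indicator, h0, h1]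
  have hC0 : C ≠ 0 := by
    rw [hC]
    refine (setLIntegral_pos_iff (by fun_prop)).2 ?_ |>.ne'
    have : (Function.support fun r : ℝ => ENNReal.ofReal (r ^ d)) ∩ Ioo 0 1 = Ioo 0 1 := by
      apply inter_eq_right.2
      intro r hr
      simp [pow_pos hr.1]
    rw [this]; simp
  have hCt : C ≠ ⊤ := by
    rw [hC]
    refine ne_top_of_le_ne_top (b := ∫⁻ r in Ioo (0:ℝ) 1, 1) (by simp) ?_
    refine setLIntegral_mono (by fun_prop) ?_
    intro r hr
    simpa using pow_le_one₀ hr.1.le hr.2.le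
  let Φ : ℝ → ℝ → ℝ≥0∞ := fun t r => K (t / r) * h r
  have hΦ : Measurable (Function.uncurry Φ) := by
    simp only [Φ, Function.uncurry_def]; fun_prop
  have L := polar_lint (volume : Measure (EuclideanSpace ℝ (Fin (d + 1))))
    (fun y => Φ (inner ℝ e y) ‖y‖) (fun v => K (inner ℝ e v)) h (by fun_prop) hh (by
      intro v r hr
      simp only [Φ, inner_smul_right, norm_smul, norm_eq_of_mem_sphere, mul_one,
        Real.norm_of_nonneg hr.le]
      rw [mul_div_cancel_left₀ _ hr.ne'])
  rw [lint_split d e he Φ hΦ] at L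
  simp only [finrank_euclideanSpace, Fintype.card_fin, Nat.add_sub_cancel] at L
  change _ = _ * C at L
  have R : ∀ t : ℝ, ∫⁻ w : EuclideanSpace ℝ (Fin d), Φ t (√(t ^ 2 + ‖w‖ ^ 2)) =
      (volume : Measure (EuclideanSpace ℝ (Fin d))).toSphere Set.univ *
       ∫⁻ s in Ioi (0 : ℝ), ENNReal.ofReal (s ^ (d - 1)) * Φ t (√(t ^ 2 + s ^ 2)) := by
    intro t
    have := polar_lint (volume : Measure (EuclideanSpace ℝ (Fin d)))
      (fun w => Φ t (√(t ^ 2 + ‖w‖ ^ 2))) (fun v => 1) (fun s => Φ t (√(t ^ 2 + s ^ 2)))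
      (by fun_prop) (by fun_prop) (by
        intro v r hr
        simp [norm_smul])
    simpa using this
  simp_rw [R] at L
  have mm : Measurable (fun p : ℝ × ℝ =>
     (Ioi (0:ℝ)).indicator (fun s => ENNReal.ofReal (s ^ (d - 1)) * Φ p.1 (√(p.1 ^ 2 + s ^ 2))) p.2) := by
    have : Measurable (fun p : ℝ × ℝ =>
      (ENNReal.ofReal (p.2 ^ (d - 1)) * Φ p.1 (√(p.1 ^ 2 + p.2 ^ 2)))) := by fun_prop
    exact this.indicator (measurable_snd measurableSet_Ioi)
  have R2 : ∫⁻ t : ℝ, ∫⁻ s in Ioi (0 : ℝ), ENNReal.ofReal (s ^ (d - 1)) * Φ t (√(t ^ 2 + s ^ 2))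
      = C * ∫⁻ θ in Ioo 0 π, ENNReal.ofReal (sin θ ^ (d - 1)) * K (cos θ) := by
    simp_rw [← lintegral_indicator measurableSet_Ioi]
    rw [← lintegral_prod _ mm.aemeasurable, ← Measure.volume_eq_prod,
      ← lintegral_comp_polarCoord_symm, polarCoord_target, Measure.volume_eq_prod,
      ← Measure.prod_restrict]
    have hI : ∫⁻ θ in Ioo 0 π, ENNReal.ofReal (sin θ ^ (d - 1)) * K (cos θ) =
        ∫⁻ θ in Ioo (-π) π, (Ioo 0 π).indicator
          (fun θ => ENNReal.ofReal (sin θ ^ (d - 1)) * K (cos θ)) θ := by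
      rw [lintegral_indicator measurableSet_Ioo, Measure.restrict_restrict measurableSet_Ioo,
        inter_eq_left.2 (Ioo_subset_Ioo_left (by linarith [pi_pos]))]
    rw [hI, ← lintegral_prod_mul (by fun_prop) ((Measurable.indicator (by fun_prop) measurableSet_Ioo).aemeasurable)]
    rw [Measure.prod_restrict]
    refine setLIntegral_congr_fun (measurableSet_Ioi.prod measurableSet_Ioo) ?_
    rintro ⟨r, θ⟩ ⟨hr, hθ⟩
    simp only [mem_Ioi, mem_Ioo] at hr hθ
    simp only [polarCoord_symm_apply, smul_eq_mul]
    by_cases h0 : 0 < θ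
    · have hs : 0 < sin θ := sin_pos_of_pos_of_lt_pi h0 hθ.2
      rw [indicator_of_mem (show r * sin θ ∈ Ioi 0 from mul_pos hr hs),
        indicator_of_mem (show θ ∈ Ioo 0 π from ⟨h0, hθ.2⟩)]
      have : √((r * cos θ) ^ 2 + (r * sin θ) ^ 2) = r := by
        rw [show (r * cos θ) ^ 2 + (r * sin θ) ^ 2 = r ^ 2 by
          linear_combination r^2 * sin_sq_add_cos_sq θ, Real.sqrt_sq hr.le]
      rw [this]
      simp only [Φ]
      rw [mul_div_cancel_left₀ _ hr.ne', mul_pow, ENNReal.ofReal_mul (by positivity),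
        show r ^ d = r * r ^ (d - 1) by rw [← pow_succ', Nat.sub_add_cancel hd],
        ENNReal.ofReal_mul hr.le]
      ring
    · have hs : sin θ ≤ 0 := sin_nonpos_of_nonpos_of_neg_pi_le (not_lt.1 h0) hθ.1.le
      rw [indicator_of_notMem (by
          simp only [mem_Ioi, not_lt]; exact mul_nonpos_of_nonneg_of_nonpos hr.le hs),
        indicator_of_notMem (by simp [h0])]
      simp
  rw [lintegral_const_mul _ ?_, R2] at L
  · have := L.symm
    rw [mul_comm C, ← mul_assoc] at this
    exact (ENNReal.mul_left_inj hC0 hCt).1 this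
  · simp_rw [← lintegral_indicator measurableSet_Ioi]
    exact mm.lintegral_prod_right'

lemma infDist_span {E : Type*} [NormedAddCommGroup E] [InnerProductSpace ℝ E]
    (e v : E) (c : ℝ) (hc : 0 < c) (he : ‖e‖ = 1) (hv : ‖v‖ = 1) :
    Metric.infDist (c • e) (Submodule.span ℝ {v} : Submodule ℝ E) =
      c * √(1 - (inner ℝ e v) ^ 2) := by
  have h := Submodule.starProjection_minimal (U := Submodule.span ℝ {v}) (c • e)
  rw [Metric.infDist_eq_iInf]
  simp_rw [dist_eq_norm]
  refine h.symm.trans ?_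
  rw [Submodule.starProjection_unit_singleton ℝ hv, ← Real.sqrt_sq (norm_nonneg _)]
  have hcs : c * √(1 - (inner ℝ e v) ^ 2) = √(c ^ 2 * (1 - (inner ℝ e v) ^ 2)) := by
    rw [Real.sqrt_mul (by positivity), Real.sqrt_sq hc.le]
  rw [hcs]
  congr 1
  rw [@norm_sub_sq_real]
  simp only [norm_smul, inner_smul_left, inner_smul_right, he, hv, real_inner_comm e v, mul_pow]
  simp only [mul_one, one_pow, Real.norm_eq_abs, sq_abs, RCLike.conj_to_real, mul_pow]
  ring

lemma log_part (d : ℕ) (hd : 1 ≤ d) (e : EuclideanSpace ℝ (Fin (d + 1))) (he : ‖e‖ = 1) :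
    Integrable (fun v : Metric.sphere (0 : EuclideanSpace ℝ (Fin (d + 1))) 1 =>
      Real.log (√(1 - (inner ℝ e (v : EuclideanSpace ℝ (Fin (d + 1)))) ^ 2)))
      ((volume : Measure (EuclideanSpace ℝ (Fin (d + 1)))).toSphere) ∧
    ∫ v : Metric.sphere (0 : EuclideanSpace ℝ (Fin (d + 1))) 1,
      Real.log (√(1 - (inner ℝ e (v : EuclideanSpace ℝ (Fin (d + 1)))) ^ 2))
      ∂((volume : Measure (EuclideanSpace ℝ (Fin (d + 1)))).toSphere) =
    ((volume : Measure (EuclideanSpace ℝ (Fin d))).toSphere Set.univ).toReal *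
      ∫ φ in (0 : ℝ)..Real.pi, Real.sin φ ^ (d - 1) * Real.log (Real.sin φ) := by
  have hk := key d hd e he (fun u => ENNReal.ofReal (-Real.log (√(1 - u ^ 2)))) (by fun_prop)
  have hgi : IntegrableOn (fun θ => -(sin θ ^ (d - 1) * Real.log (sin θ))) (Ioo 0 π) := by
    have h1 : IntegrableOn (fun θ => Real.log (sin θ)) (Ioo 0 π) :=
      ((intervalIntegrable_iff_integrableOn_Ioo_of_le pi_pos.le).1 intervalIntegrable_log_sin)
    refine (Integrable.bdd_mul (c := 1) h1 (by fun_prop) ?_).neg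
    filter_upwards with θ
    rw [norm_pow]
    exact pow_le_one₀ (norm_nonneg _) (abs_sin_le_one θ)
  have hg0 : ∀ θ ∈ Ioo 0 π, 0 ≤ -(sin θ ^ (d - 1) * Real.log (sin θ)) := by
    intro θ hθ
    have hs : 0 < sin θ := sin_pos_of_pos_of_lt_pi hθ.1 hθ.2
    have := mul_nonneg (pow_nonneg hs.le (d - 1))
      (neg_nonneg.2 (Real.log_nonpos hs.le (sin_le_one θ)))
    linarith
  have hI : ∫⁻ θ in Ioo 0 π, ENNReal.ofReal (sin θ ^ (d - 1)) *
      ENNReal.ofReal (-Real.log (√(1 - cos θ ^ 2))) =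
      ENNReal.ofReal (∫ θ in Ioo 0 π, -(sin θ ^ (d - 1) * Real.log (sin θ))) := by
    rw [ofReal_integral_eq_lintegral_ofReal hgi
      ((ae_restrict_iff' measurableSet_Ioo).2 (Filter.Eventually.of_forall hg0))]
    refine setLIntegral_congr_fun measurableSet_Ioo ?_
    intro θ hθ
    have hs : 0 < sin θ := sin_pos_of_pos_of_lt_pi hθ.1 hθ.2
    simp only
    rw [← ENNReal.ofReal_mul (by positivity), ← abs_sin_eq_sqrt_one_sub_cos_sq, abs_of_pos hs,
      mul_neg]
  rw [hI] at hk
  have hf0 : ∀ v : Metric.sphere (0 : EuclideanSpace ℝ (Fin (d + 1))) 1,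
      0 ≤ -Real.log (√(1 - (inner ℝ e (v : EuclideanSpace ℝ (Fin (d + 1)))) ^ 2)) := by
    intro v
    refine neg_nonneg.2 (Real.log_nonpos (Real.sqrt_nonneg _) ?_)
    rw [Real.sqrt_le_iff]
    refine ⟨zero_le_one, ?_⟩
    nlinarith [sq_nonneg (inner ℝ e (v : EuclideanSpace ℝ (Fin (d + 1))))]
  have hm : AEStronglyMeasurable (fun v : Metric.sphere (0 : EuclideanSpace ℝ (Fin (d + 1))) 1 =>
      -Real.log (√(1 - (inner ℝ e (v : EuclideanSpace ℝ (Fin (d + 1)))) ^ 2)))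
      ((volume : Measure (EuclideanSpace ℝ (Fin (d + 1)))).toSphere) := by
    apply Measurable.aestronglyMeasurable
    fun_prop
  constructor
  · rw [← integrable_neg_iff]
    refine ⟨hm, ?_⟩
    refine (hasFiniteIntegral_iff_ofReal (Filter.Eventually.of_forall hf0)).2 ?_
    refine lt_of_eq_of_lt hk ?_
    exact ENNReal.mul_lt_top (measure_lt_top _ _) ENNReal.ofReal_lt_top
  · have h := integral_eq_lintegral_of_nonneg_ae (Filter.Eventually.of_forall hf0) hm
    rw [hk, integral_neg, ENNReal.toReal_mul, ENNReal.toReal_ofReal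
      (setIntegral_nonneg measurableSet_Ioo hg0), integral_neg, mul_neg, neg_inj] at h
    rw [h, intervalIntegral.integral_of_le pi_pos.le, integral_Ioc_eq_integral_Ioo]

/-- For `d ≥ 1`, the average over the unit sphere `S^d ⊂ ℝ^{d+1}` of
`ln(dist(span v, x))` equals `ln|x| + C_{d,ln}`, where
`C_{d,ln} = (|S^{d-1}|/|S^d|)·∫_0^π sin^{d-1}(φ)·ln(sin φ) dφ`. The surface measures of
`S^{d-1} ⊂ ℝ^d` and `S^d ⊂ ℝ^{d+1}` are the total masses of the respective `volume.toSphere`. -/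
theorem stmt_13 (d : ℕ) (hd : 1 ≤ d) :
    ∀ x : EuclideanSpace ℝ (Fin (d + 1)), x ≠ 0 →
      (1 / (((volume : Measure (EuclideanSpace ℝ (Fin (d + 1)))).toSphere Set.univ).toReal)) *
        ∫ v : Metric.sphere (0 : EuclideanSpace ℝ (Fin (d + 1))) 1,
          Real.log (Metric.infDist x
            (Submodule.span ℝ {(v : EuclideanSpace ℝ (Fin (d + 1)))} :
              Submodule ℝ (EuclideanSpace ℝ (Fin (d + 1)))))
          ∂((volume : Measure (EuclideanSpace ℝ (Fin (d + 1)))).toSphere) =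
      Real.log ‖x‖ +
        (((volume : Measure (EuclideanSpace ℝ (Fin d))).toSphere Set.univ).toReal /
          ((volume : Measure (EuclideanSpace ℝ (Fin (d + 1)))).toSphere Set.univ).toReal) *
          ∫ φ in (0 : ℝ)..Real.pi, Real.sin φ ^ (d - 1) * Real.log (Real.sin φ) := by
  intro x hx
  have hc : 0 < ‖x‖ := norm_pos_iff.2 hx
  let e : EuclideanSpace ℝ (Fin (d + 1)) := ‖x‖⁻¹ • x
  have he : ‖e‖ = 1 := by simp [e, norm_smul, hc.ne']
  have hxe : x = ‖x‖ • e := by simp [e, smul_smul, hc.ne']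
  obtain ⟨hi, hv⟩ := log_part d hd e he
  have hS : ((volume : Measure (EuclideanSpace ℝ (Fin (d + 1)))).toSphere Set.univ).toReal ≠ 0 := by
    refine (ENNReal.toReal_pos ?_ (measure_ne_top _ _)).ne'
    rw [Ne, Measure.measure_univ_eq_zero]
    exact Measure.toSphere_ne_zero _
  have hae : ∀ᵐ (v : Metric.sphere (0 : EuclideanSpace ℝ (Fin (d + 1))) 1) ∂((volume : Measure (EuclideanSpace ℝ (Fin (d + 1)))).toSphere),
      √(1 - (inner ℝ e (v : EuclideanSpace ℝ (Fin (d + 1)))) ^ 2) ≠ 0 := by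
    have hM : MeasurableSet {u : ℝ | √(1 - u ^ 2) = 0} :=
      measurableSet_eq_fun (by fun_prop) (by fun_prop)
    have hmI : Measurable ({u : ℝ | √(1 - u ^ 2) = 0}.indicator (1 : ℝ → ℝ≥0∞)) :=
      measurable_one.indicator hM
    have hk := key d hd e he _ hmI
    have h0 : ∫⁻ θ in Ioo 0 π, ENNReal.ofReal (sin θ ^ (d - 1)) *
        {u : ℝ | √(1 - u ^ 2) = 0}.indicator (1 : ℝ → ℝ≥0∞) (cos θ) = 0 := by
      rw [setLIntegral_congr_fun (g := fun _ => 0) measurableSet_Ioo]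
      · simp
      intro θ hθ
      have hs : 0 < sin θ := sin_pos_of_pos_of_lt_pi hθ.1 hθ.2
      simp only
      rw [indicator_of_notMem, mul_zero]
      rw [mem_ofPred_eq, ← abs_sin_eq_sqrt_one_sub_cos_sq, abs_of_pos hs]
      exact hs.ne'
    rw [h0, mul_zero, lintegral_eq_zero_iff (by fun_prop)] at hk
    filter_upwards [hk] with v hv h
    simp [indicator, h] at hv
  have hcongr : ∫ v : Metric.sphere (0 : EuclideanSpace ℝ (Fin (d + 1))) 1,
          Real.log (Metric.infDist x
            (Submodule.span ℝ {(v : EuclideanSpace ℝ (Fin (d + 1)))} :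
              Submodule ℝ (EuclideanSpace ℝ (Fin (d + 1)))))
          ∂((volume : Measure (EuclideanSpace ℝ (Fin (d + 1)))).toSphere) =
      ∫ v : Metric.sphere (0 : EuclideanSpace ℝ (Fin (d + 1))) 1, (Real.log ‖x‖ +
        Real.log (√(1 - (inner ℝ e (v : EuclideanSpace ℝ (Fin (d + 1)))) ^ 2)))
          ∂((volume : Measure (EuclideanSpace ℝ (Fin (d + 1)))).toSphere) := by
    refine integral_congr_ae ?_
    filter_upwards [hae] with v hv
    have := infDist_span e v ‖x‖ hc he (norm_eq_of_mem_sphere v)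
    rw [← hxe] at this
    rw [this, Real.log_mul hc.ne' hv]
  rw [hcongr, integral_add (integrable_const _) hi, hv, integral_const, smul_eq_mul, Measure.real]
  field_simp
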